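/- Identity for the potential function (Proposition 3.4(a), trivialized flat version): if (u, A) is a smooth solution of the YMH equations on U, then pointwise on U one has −(∂₁²h + ∂₂²h) = (1/ε²)(|D₁u|² + |D₂u|²) − (1/ε²)|u|²·h. -/

import Mathlib

open MeasureTheory Complex

noncomputable section

/-- Partial derivative in the first coordinate direction. -/
def pd1 {E : Type*} [NormedAddCommGroup E] [NormedSpace ℝ E] (f : ℝ × ℝ → E) (x : ℝ × ℝ) : E :=
  fderiv ℝ f x (1, 0)

/-- Partial derivative in the second coordinate direction. -/
def pd2 {E : Type*} [NormedAddCommGroup E] [NormedSpace ℝ E] (f : ℝ × ℝ → E) (x : ℝ × ℝ) : E :=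
  fderiv ℝ f x (0, 1)

/-- First covariant derivative `D₁f = ∂₁f − iA₁f`. -/
def D1 (A1 : ℝ × ℝ → ℝ) (f : ℝ × ℝ → ℂ) (x : ℝ × ℝ) : ℂ :=
  pd1 f x - Complex.I * (A1 x) * f x

/-- Second covariant derivative `D₂f = ∂₂f − iA₂f`. -/
def D2 (A2 : ℝ × ℝ → ℝ) (f : ℝ × ℝ → ℂ) (x : ℝ × ℝ) : ℂ :=
  pd2 f x - Complex.I * (A2 x) * f x

/-- Curvature function `F = ∂₁A₂ − ∂₂A₁`. -/
def curv (A1 A2 : ℝ × ℝ → ℝ) (x : ℝ × ℝ) : ℝ := pd1 A2 x - pd2 A1 x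

/-- `h = (1 − |u|²)/(2ε²)`. -/
def hfun (ε : ℝ) (u : ℝ × ℝ → ℂ) (x : ℝ × ℝ) : ℝ := (1 - ‖u x‖ ^ 2) / (2 * ε ^ 2)

/-- `σ₊ = D₁u + iD₂u`. -/
def sigP (u : ℝ × ℝ → ℂ) (A1 A2 : ℝ × ℝ → ℝ) (x : ℝ × ℝ) : ℂ :=
  D1 A1 u x + Complex.I * D2 A2 u x

/-- `σ₋ = D₁u − iD₂u`. -/
def sigM (u : ℝ × ℝ → ℂ) (A1 A2 : ℝ × ℝ → ℝ) (x : ℝ × ℝ) : ℂ :=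
  D1 A1 u x - Complex.I * D2 A2 u x

/-- The Yang--Mills--Higgs energy over the fundamental domain `[0,1]²`. -/
def energy (ε : ℝ) (u : ℝ × ℝ → ℂ) (A1 A2 : ℝ × ℝ → ℝ) : ℝ :=
  ∫ x in Set.Icc (0:ℝ) 1 ×ˢ Set.Icc (0:ℝ) 1,
    (ε ^ 2 * curv A1 A2 x ^ 2 + ‖D1 A1 u x‖ ^ 2 + ‖D2 A2 u x‖ ^ 2
      + (1 - ‖u x‖ ^ 2) ^ 2 / (4 * ε ^ 2))

/-- `ℤ²`-periodicity. -/
def Periodic2 {E : Type*} (f : ℝ × ℝ → E) : Prop :=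
  ∀ x : ℝ × ℝ, f (x.1 + 1, x.2) = f x ∧ f (x.1, x.2 + 1) = f x

/-- The Yang--Mills--Higgs equations on all of `ℝ²`. -/
def IsYMH (ε : ℝ) (u : ℝ × ℝ → ℂ) (A1 A2 : ℝ × ℝ → ℝ) : Prop :=
  (∀ x, -(D1 A1 (D1 A1 u) x + D2 A2 (D2 A2 u) x) = (hfun ε u x : ℂ) * u x) ∧
  (∀ x, ε ^ 2 * pd2 (curv A1 A2) x = ((starRingEnd ℂ) (u x) * D1 A1 u x).im) ∧
  (∀ x, ε ^ 2 * pd1 (curv A1 A2) x = -((starRingEnd ℂ) (u x) * D2 A2 u x).im)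

/-- The Yang--Mills--Higgs equations on an open set `U ⊆ ℝ²`. -/
def IsYMHOn (ε : ℝ) (u : ℝ × ℝ → ℂ) (A1 A2 : ℝ × ℝ → ℝ) (U : Set (ℝ × ℝ)) : Prop :=
  (∀ x ∈ U, -(D1 A1 (D1 A1 u) x + D2 A2 (D2 A2 u) x) = (hfun ε u x : ℂ) * u x) ∧
  (∀ x ∈ U, ε ^ 2 * pd2 (curv A1 A2) x = ((starRingEnd ℂ) (u x) * D1 A1 u x).im) ∧
  (∀ x ∈ U, ε ^ 2 * pd1 (curv A1 A2) x = -((starRingEnd ℂ) (u x) * D2 A2 u x).im)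

/-- Stability: nonnegative second variation of the energy along all smooth periodic
variations of the section and the connection. -/
def Stable (ε : ℝ) (u : ℝ × ℝ → ℂ) (A1 A2 : ℝ × ℝ → ℝ) : Prop :=
  ∀ v : ℝ × ℝ → ℂ, ∀ a1 a2 : ℝ × ℝ → ℝ,
    ContDiff ℝ (⊤ : ℕ∞) v → Periodic2 v → ContDiff ℝ (⊤ : ℕ∞) a1 → Periodic2 a1 →
    ContDiff ℝ (⊤ : ℕ∞) a2 → Periodic2 a2 →
    0 ≤ iteratedDeriv 2 (fun t : ℝ =>
      energy ε (fun x => u x + t • v x)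
        (fun x => A1 x + t * a1 x) (fun x => A2 x + t * a2 x)) 0

/-!
A connection whose form is skew-adjoint differentiates inner products by the Leibniz rule, since its
zeroth-order terms cancel. Applying this to `⟪u, u⟫` and then to `⟪u, D u⟫` gives
`½ ∂ᵥ²|u|² = |Dᵥu|² + ⟪u, DᵥDᵥu⟫`. Summing over the directions and substituting `-∑ DᵢDᵢu = h u`
yields the identity for `h`, which is an affine function of `|u|²`.
-/

section Potential

/-- The function `h = (1 - |f|²) / (2ε²)` for a section `f` with values in any normed group;
for `f : ℝ × ℝ → ℂ` it unfolds to the same expression as `hfun`. -/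
def potential {X F : Type*} [NormedAddCommGroup F] (ε : ℝ) (f : X → F) (x : X) : ℝ :=
  (1 - ‖f x‖ ^ 2) / (2 * ε ^ 2)

variable {E F : Type*} [NormedAddCommGroup E] [NormedSpace ℝ E] [NormedAddCommGroup F]

theorem fderiv_potential (ε : ℝ) (f : E → F) (x v : E) :
    fderiv ℝ (potential ε f) x v = -(2 * ε ^ 2)⁻¹ * fderiv ℝ (fun y => ‖f y‖ ^ 2) x v := by
  have affine : potential ε f = (2 * ε ^ 2)⁻¹ • fun y => 1 - ‖f y‖ ^ 2 := by
    funext y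
    rw [potential, div_eq_inv_mul, Pi.smul_apply, smul_eq_mul]
  rw [affine, fderiv_const_smul_field, Pi.smul_apply, fderiv_const_sub, smul_apply, neg_apply,
    smul_eq_mul, mul_neg, neg_mul]

theorem fderiv_fderiv_potential (ε : ℝ) (f : E → F) (x v : E) :
    fderiv ℝ (fun y => fderiv ℝ (potential ε f) y v) x v =
      -(2 * ε ^ 2)⁻¹ * fderiv ℝ (fun y => fderiv ℝ (fun z => ‖f z‖ ^ 2) y v) x v := by
  have first_order : (fun y => fderiv ℝ (potential ε f) y v) =
      -(2 * ε ^ 2)⁻¹ • fun y => fderiv ℝ (fun z => ‖f z‖ ^ 2) y v :=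
    funext fun y => fderiv_potential ε f y v
  rw [first_order, fderiv_const_smul_field, Pi.smul_apply, smul_apply, smul_eq_mul]

end Potential

/-- The covariant derivative `∂ᵥf - ωf` in the direction `v` of a section `f` of the trivial bundle
with fibre `F`. Here `ω` is only the component along `v` of the connection form, so that the
components of a connection in several directions are given as separate functions. -/
def covDeriv {E F : Type*} [NormedAddCommGroup E] [NormedSpace ℝ E] [NormedAddCommGroup F]
    [NormedSpace ℝ F] (ω : E → F →ₗ[ℝ] F) (v : E) (f : E → F) (x : E) : F :=
  fderiv ℝ f x v - ω x (f x)

section MetricConnection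

open scoped InnerProductSpace Topology

variable {E F : Type*} [NormedAddCommGroup E] [NormedSpace ℝ E]
  [NormedAddCommGroup F] [InnerProductSpace ℝ F]
  {ω : E → F →ₗ[ℝ] F} {f g : E → F} {x : E}

theorem fderiv_inner_eq_covDeriv (hω : (innerₗ F).IsSkewAdjoint (ω x))
    (hf : DifferentiableAt ℝ f x) (hg : DifferentiableAt ℝ g x) (v : E) :
    fderiv ℝ (fun y => ⟪f y, g y⟫_ℝ) x v =
      ⟪f x, covDeriv ω v g x⟫_ℝ + ⟪covDeriv ω v f x, g x⟫_ℝ := by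
  have skew : ⟪ω x (f x), g x⟫_ℝ = -⟪f x, ω x (g x)⟫_ℝ := by
    simpa using hω (f x) (g x)
  rw [fderiv_inner_apply ℝ hf hg, covDeriv, covDeriv, inner_sub_left, inner_sub_right, skew]
  ring

theorem fderiv_norm_sq_eq_covDeriv (hω : (innerₗ F).IsSkewAdjoint (ω x))
    (hf : DifferentiableAt ℝ f x) (v : E) :
    fderiv ℝ (fun y => ‖f y‖ ^ 2) x v = 2 * ⟪f x, covDeriv ω v f x⟫_ℝ := by
  simp only [← real_inner_self_eq_norm_sq]
  rw [fderiv_inner_eq_covDeriv hω hf hf, real_inner_comm (f x) (covDeriv ω v f x), two_mul]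

theorem fderiv_fderiv_norm_sq_eq_covDeriv {v : E} (hω : ∀ y, (innerₗ F).IsSkewAdjoint (ω y))
    (hf : ∀ᶠ y in 𝓝 x, DifferentiableAt ℝ f y) (hDf : DifferentiableAt ℝ (covDeriv ω v f) x) :
    fderiv ℝ (fun y => fderiv ℝ (fun z => ‖f z‖ ^ 2) y v) x v =
      2 * (⟪f x, covDeriv ω v (covDeriv ω v f) x⟫_ℝ + ‖covDeriv ω v f x‖ ^ 2) := by
  have first_order : (fun y => fderiv ℝ (fun z => ‖f z‖ ^ 2) y v) =ᶠ[𝓝 x]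
      fun y => 2 * ⟪f y, covDeriv ω v f y⟫_ℝ :=
    hf.mono fun y hy => fderiv_norm_sq_eq_covDeriv (hω y) hy v
  have hfx : DifferentiableAt ℝ f x := hf.self_of_nhds
  rw [first_order.fderiv_eq, fderiv_const_mul (hfx.inner ℝ hDf), smul_apply,
    fderiv_inner_eq_covDeriv (hω x) hfx hDf, real_inner_self_eq_norm_sq, smul_eq_mul]

theorem laplacian_h_identity_general {ι : Type*} [Fintype ι] {ε : ℝ} (hε : ε ≠ 0)
    {v : ι → E} {ω : ι → E → F →ₗ[ℝ] F} {u : E → F} {x : E}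
    (hω : ∀ i y, (innerₗ F).IsSkewAdjoint (ω i y))
    (hu : ∀ᶠ y in 𝓝 x, DifferentiableAt ℝ u y)
    (hDu : ∀ i, DifferentiableAt ℝ (covDeriv (ω i) (v i) u) x)
    (hHiggs : -∑ i, covDeriv (ω i) (v i) (covDeriv (ω i) (v i) u) x = potential ε u x • u x) :
    -∑ i, fderiv ℝ (fun y => fderiv ℝ (potential ε u) y (v i)) x (v i) =
      1 / ε ^ 2 * ∑ i, ‖covDeriv (ω i) (v i) u x‖ ^ 2
        - 1 / ε ^ 2 * ‖u x‖ ^ 2 * potential ε u x := by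
  have pairing : ∑ i, ⟪u x, covDeriv (ω i) (v i) (covDeriv (ω i) (v i) u) x⟫_ℝ =
      -(potential ε u x * ‖u x‖ ^ 2) := by
    rw [← inner_sum, neg_eq_iff_eq_neg.mp hHiggs, inner_neg_right, real_inner_smul_right,
      real_inner_self_eq_norm_sq]
  simp only [fderiv_fderiv_potential, fderiv_fderiv_norm_sq_eq_covDeriv (hω _) hu (hDu _)]
  rw [← Finset.mul_sum, ← Finset.mul_sum, Finset.sum_add_distrib, pairing]
  field_simp
  ring

end MetricConnection

section UnitaryConnection

variable {E : Type*} [NormedAddCommGroup E] [NormedSpace ℝ E]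

/-- The connection form `iA` on the trivial Hermitian line bundle, for which `covDeriv` is
`∂ᵥ - iA`; thus `D1 A` and `D2 A` are by definition `covDeriv (unitaryForm A)` in the directions
`(1, 0)` and `(0, 1)`. -/
def unitaryForm {X : Type*} (A : X → ℝ) (x : X) : ℂ →ₗ[ℝ] ℂ := LinearMap.mulLeft ℝ (I * A x)

theorem isSkewAdjoint_unitaryForm {X : Type*} (A : X → ℝ) (x : X) :
    (innerₗ ℂ).IsSkewAdjoint (unitaryForm A x) := by
  intro w z
  change inner ℝ (I * A x * w) z = inner ℝ w (-(I * A x * z))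
  rw [Complex.inner, Complex.inner, map_mul, map_mul, conj_I, conj_ofReal]
  ring_nf

theorem differentiableAt_covDeriv_unitaryForm {A : E → ℝ} {f : E → ℂ} {x : E}
    (hf : ContDiffAt ℝ 2 f x) (hA : DifferentiableAt ℝ A x) (v : E) :
    DifferentiableAt ℝ (covDeriv (unitaryForm A) v f) x := by
  have hdf : DifferentiableAt ℝ (fun y => fderiv ℝ f y v) x :=
    ((hf.fderiv_right (m := 1) (by norm_num)).differentiableAt one_ne_zero).clm_apply
      (differentiableAt_const v)
  have hAc : DifferentiableAt ℝ (fun y => (A y : ℂ)) x :=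
    Complex.ofRealCLM.differentiableAt.comp x hA
  exact hdf.sub ((hAc.const_mul I).mul (hf.differentiableAt two_ne_zero))

end UnitaryConnection

/-- Identity for the potential function `h` (Proposition 3.4(a), trivialized flat version). -/
theorem laplacian_h_identity
    (ε : ℝ) (hε : 0 < ε) (U : Set (ℝ × ℝ)) (hU : IsOpen U)
    (u : ℝ × ℝ → ℂ) (A1 A2 : ℝ × ℝ → ℝ)
    (hu : ContDiffOn ℝ (⊤ : ℕ∞) u U) (hA1 : ContDiffOn ℝ (⊤ : ℕ∞) A1 U) (hA2 : ContDiffOn ℝ (⊤ : ℕ∞) A2 U)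
    (hYMH : IsYMHOn ε u A1 A2 U) :
    ∀ x ∈ U,
      -(pd1 (pd1 (hfun ε u)) x + pd2 (pd2 (hfun ε u)) x) =
        1 / ε ^ 2 * (‖D1 A1 u x‖ ^ 2 + ‖D2 A2 u x‖ ^ 2)
          - 1 / ε ^ 2 * ‖u x‖ ^ 2 * hfun ε u x := by
  intro x hx
  have hxU : U ∈ nhds x := hU.mem_nhds hx
  have hu_near : ∀ᶠ y in nhds x, DifferentiableAt ℝ u y :=
    (hu.differentiableOn (by simp)).eventually_differentiableAt hxU
  have hux : ContDiffAt ℝ 2 u x := (hu.contDiffAt hxU).of_le (by norm_cast)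
  have hD1u : DifferentiableAt ℝ (D1 A1 u) x := differentiableAt_covDeriv_unitaryForm hux
    ((hA1.contDiffAt hxU).differentiableAt (by simp)) (1, 0)
  have hD2u : DifferentiableAt ℝ (D2 A2 u) x := differentiableAt_covDeriv_unitaryForm hux
    ((hA2.contDiffAt hxU).differentiableAt (by simp)) (0, 1)
  have identity := laplacian_h_identity_general (v := ![(1, 0), (0, 1)])
    (ω := ![unitaryForm A1, unitaryForm A2]) hε.ne'
    (Fin.forall_fin_two.2 ⟨isSkewAdjoint_unitaryForm A1, isSkewAdjoint_unitaryForm A2⟩)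
    hu_near (Fin.forall_fin_two.2 ⟨hD1u, hD2u⟩)
    (by rw [Fin.sum_univ_two]; exact hYMH.1 x hx)
  rwa [Fin.sum_univ_two, Fin.sum_univ_two] at identity
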